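/- For C ∈ so(q)^p the following are equivalent: (i) C is a GL_q(ℝ)-distinguished point, i.e. there exists r ∈ ℝ with m1(C)·C = rC; (ii) there exist λ ∈ ℝ and a symmetric q×q real matrix D such that m1(C) = 2λ·Id_q + 2(D + Dᵀ) and Dᵀ·C = 0 (that is, DᵀCᵏ + CᵏD = 0 for all k = 1,…,p). Moreover, given (i) one may take λ = r/4 and D = (m1(C) − (r/2)·Id_q)/4. (This is the structure-matrix form of the statement that the left-invariant metric on the 2-step nilpotent Lie group N_C is a Ricci Yang–Mills soliton of symmetric Lie type if and only if C is a distinguished point of the GL_q(ℝ)-action.) -/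

import Mathlib

/-!
Since each `C k` is skew-symmetric, `(C k)²` is symmetric, and hence so is `m1 C`
(`m1_transpose`). For a symmetric `D`, the relation `m1 C = 2λ·Id + 2(D + Dᵀ)` just says
`m1 C = 2λ·Id + 4D`, so that `m1(C)·C = 4λC + 4(D·C)`. Therefore `D·C = 0` holds exactly when
`m1(C)·C = rC` with `r = 4λ`; conversely `r` determines `λ = r/4` and `D = (m1 C - (r/2)·Id)/4`.
-/

open Matrix BigOperators

/-- The moment map polynomial `m1(C) = -2 ∑ α, (Cᵅ)²`. -/
def m1 {p q : ℕ} (C : Fin p → Matrix (Fin q) (Fin q) ℝ) : Matrix (Fin q) (Fin q) ℝ :=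
  (-2 : ℝ) • ∑ α, C α * C α

/-- The Lie algebra action of `gl_q(ℝ)` on `so(q)^p`:
`X · C = (XC¹ + C¹Xᵀ, …, XCᵖ + CᵖXᵀ)`. -/
def glqAct {p q : ℕ} (X : Matrix (Fin q) (Fin q) ℝ)
    (C : Fin p → Matrix (Fin q) (Fin q) ℝ) : Fin p → Matrix (Fin q) (Fin q) ℝ :=
  fun k => X * C k + C k * Xᵀ

/-- The moment map takes symmetric values on tuples of skew-symmetric matrices. -/
theorem m1_transpose {p q : ℕ} {C : Fin p → Matrix (Fin q) (Fin q) ℝ}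
    (hC : ∀ k, (C k)ᵀ = -(C k)) : (m1 C)ᵀ = m1 C := by
  simp [m1, transpose_smul, transpose_sum, transpose_mul, hC]

/-- For `C ∈ so(q)^p` the following are equivalent: (i) `C` is a `GL_q(ℝ)`-distinguished
point, i.e. there exists `r ∈ ℝ` with `m1(C)·C = rC`; (ii) there exist `λ ∈ ℝ` and a
symmetric `q×q` real matrix `D` such that `m1(C) = 2λ·Id_q + 2(D + Dᵀ)` and `Dᵀ·C = 0`
(that is, `DᵀCᵏ + CᵏD = 0` for all `k`).  Moreover, given (i) one may take `λ = r/4` and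
`D = (m1(C) − (r/2)·Id_q)/4`.  (Structure-matrix form of: the left-invariant metric on the
2-step nilpotent Lie group `N_C` is a Ricci Yang–Mills soliton of symmetric Lie type iff
`C` is a distinguished point of the `GL_q(ℝ)`-action.) -/
theorem statement6 (p q : ℕ) (hp : 1 ≤ p) (hq : 1 ≤ q)
    (C : Fin p → Matrix (Fin q) (Fin q) ℝ) (hC : ∀ k, (C k)ᵀ = -(C k)) :
    ((∃ r : ℝ, glqAct (m1 C) C = fun k => r • C k) ↔
      (∃ (l : ℝ) (D : Matrix (Fin q) (Fin q) ℝ), Dᵀ = D ∧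
        m1 C = (2 * l) • (1 : Matrix (Fin q) (Fin q) ℝ) + (2 : ℝ) • (D + Dᵀ) ∧
        ∀ k, Dᵀ * C k + C k * D = 0)) ∧
    (∀ r : ℝ, glqAct (m1 C) C = (fun k => r • C k) →
      ((4 : ℝ)⁻¹ • (m1 C - (r / 2) • (1 : Matrix (Fin q) (Fin q) ℝ)))ᵀ =
        (4 : ℝ)⁻¹ • (m1 C - (r / 2) • (1 : Matrix (Fin q) (Fin q) ℝ)) ∧
      m1 C = (2 * (r / 4)) • (1 : Matrix (Fin q) (Fin q) ℝ) +
        (2 : ℝ) • ((4 : ℝ)⁻¹ • (m1 C - (r / 2) • (1 : Matrix (Fin q) (Fin q) ℝ)) +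
          ((4 : ℝ)⁻¹ • (m1 C - (r / 2) • (1 : Matrix (Fin q) (Fin q) ℝ)))ᵀ) ∧
      ∀ k, ((4 : ℝ)⁻¹ • (m1 C - (r / 2) • (1 : Matrix (Fin q) (Fin q) ℝ)))ᵀ * C k +
        C k * ((4 : ℝ)⁻¹ • (m1 C - (r / 2) • (1 : Matrix (Fin q) (Fin q) ℝ))) = 0) := by
  have hM := m1_transpose hC
  -- The explicit choice of `λ` and `D` also proves the forward implication.
  have key : ∀ r : ℝ, glqAct (m1 C) C = (fun k => r • C k) →
      ((4 : ℝ)⁻¹ • (m1 C - (r / 2) • (1 : Matrix (Fin q) (Fin q) ℝ)))ᵀ =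
        (4 : ℝ)⁻¹ • (m1 C - (r / 2) • (1 : Matrix (Fin q) (Fin q) ℝ)) ∧
      m1 C = (2 * (r / 4)) • (1 : Matrix (Fin q) (Fin q) ℝ) +
        (2 : ℝ) • ((4 : ℝ)⁻¹ • (m1 C - (r / 2) • (1 : Matrix (Fin q) (Fin q) ℝ)) +
          ((4 : ℝ)⁻¹ • (m1 C - (r / 2) • (1 : Matrix (Fin q) (Fin q) ℝ)))ᵀ) ∧
      ∀ k, ((4 : ℝ)⁻¹ • (m1 C - (r / 2) • (1 : Matrix (Fin q) (Fin q) ℝ)))ᵀ * C k +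
        C k * ((4 : ℝ)⁻¹ • (m1 C - (r / 2) • (1 : Matrix (Fin q) (Fin q) ℝ))) = 0 := by
    intro r hr
    have hD : ((4 : ℝ)⁻¹ • (m1 C - (r / 2) • (1 : Matrix (Fin q) (Fin q) ℝ)))ᵀ =
        (4 : ℝ)⁻¹ • (m1 C - (r / 2) • (1 : Matrix (Fin q) (Fin q) ℝ)) := by
      rw [transpose_smul, transpose_sub, transpose_smul, transpose_one, hM]
    refine ⟨hD, ?_, fun k => ?_⟩
    · rw [hD]
      module
    · have hk : m1 C * C k + C k * m1 C = r • C k := by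
        simpa only [glqAct, hM] using congrFun hr k
      rw [hD, smul_mul_assoc, mul_smul_comm, sub_mul, mul_sub, smul_mul_assoc, mul_smul_comm,
        one_mul, mul_one]
      linear_combination (norm := module) (4 : ℝ)⁻¹ • hk
  refine ⟨⟨fun ⟨r, hr⟩ => ⟨r / 4, _, key r hr⟩, ?_⟩, key⟩
  rintro ⟨l, D, hD, hm, hk⟩
  refine ⟨4 * l, funext fun k => ?_⟩
  have hk' := hk k
  rw [hD] at hm hk'
  simp only [glqAct]
  rw [hM, hm, add_mul, mul_add, smul_mul_assoc, mul_smul_comm, smul_mul_assoc, mul_smul_comm,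
    add_mul, mul_add, one_mul, mul_one]
  linear_combination (norm := module) (4 : ℝ) • hk'
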